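/- arXiv:1904.08592 — 2 statements merged into one kernel-verified Lean document; each statement's English description precedes it below -/
import Mathlib

section
/- For every real number λ and every positive integer k, ℰ_{k,λ} = (1)_{k,λ} + Σ_{l=0}^{k−1} C(k,l)(−1)^{k+l}(1)_{l,λ}·(ℰ_{k−l,−λ} + 2·(1)_{k−l,−λ}). -/
/-!
Write `e` for the exponential generating function of `(1)_{n,λ}` (formally `(1+λt)^{1/λ}`) and `G`
for that of `ℰ_{n,λ}`, so that `G (e + 1) = 2`. The generating function `F_x` of `(x)_{n,λ}` solves
`(1 + λt) F' = x F`; hence `(F_1 F_{-1})' = 0`, i.e. `F_{-1} = 1/e`. Replacing `(λ, t)` by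
`(-λ, -t)` turns `e` into `F_{-1} = 1/e` and `G` into `H` with `H (1/e + 1) = 2`.
Adding the `l = k` term, which is `3 (1)_{k,λ}`, to the sum, the claim becomes
`G = e (H + 2/e) - 2 e`, and this follows on multiplying by the nonzero series `e + 1`.
-/

open Finset

/-- λ-falling factorial: `(x)_{n,λ} = x(x-λ)⋯(x-(n-1)λ)`. -/
noncomputable def fallFac (lam x : ℝ) : ℕ → ℝ
  | 0 => 1
  | n + 1 => fallFac lam x n * (x - n * lam)

/-- Degenerate Euler numbers, defined by `ℰ_{0,λ}=1` and
`Σ_{l=0}^{n} C(n,l) ℰ_{l,λ} (1)_{n-l,λ} + ℰ_{n,λ} = 0` for `n ≥ 1`. -/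
noncomputable def degE (lam : ℝ) : ℕ → ℝ
  | 0 => 1
  | n + 1 => -(1/2) * ∑ l ∈ (Finset.range (n+1)).attach,
      ((n+1).choose l.1 : ℝ) * degE lam l.1 * fallFac lam 1 (n + 1 - l.1)
  decreasing_by exact Finset.mem_range.mp l.2

/-- Degenerate Euler polynomials `ℰ_{n,λ}(x) = Σ_{l=0}^n C(n,l) ℰ_{l,λ} (x)_{n-l,λ}`. -/
noncomputable def degEP (lam x : ℝ) (n : ℕ) : ℝ :=
  ∑ l ∈ Finset.range (n + 1), (n.choose l : ℝ) * degE lam l * fallFac lam x (n - l)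

/-- Degenerate Bernstein polynomials `B_{k,n}(x|λ)` (vanishing for `k > n`). -/
noncomputable def bern (lam x : ℝ) (k n : ℕ) : ℝ :=
  (n.choose k : ℝ) * fallFac lam x k * fallFac lam (1 - x) (n - k)

/-- Two variable degenerate Bernstein polynomials `B_{k,n}(x₁,x₂|λ)`. -/
noncomputable def bern2 (lam x1 x2 : ℝ) (k n : ℕ) : ℝ :=
  (n.choose k : ℝ) * fallFac lam x1 k * fallFac lam (1 - x2) (n - k)

/-- Higher order degenerate Euler polynomials `ℰ^{(k)}_{n,λ}(x)`. -/
noncomputable def degEPk (lam : ℝ) : ℕ → ℕ → ℝ → ℝ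
  | 0, n, x => fallFac lam x n
  | k + 1, n, x => ∑ m ∈ Finset.range (n + 1),
      (n.choose m : ℝ) * degE lam m * degEPk lam k (n - m) x

/-- The exponential generating function `∑ aₙ tⁿ / n!` as a formal power series. -/
noncomputable def egf (a : ℕ → ℝ) : PowerSeries ℝ := PowerSeries.mk fun n => a n / n.factorial

lemma egf_mul (a b : ℕ → ℝ) :
    egf a * egf b =
      egf fun n => ∑ l ∈ Finset.range (n + 1), (n.choose l : ℝ) * a l * b (n - l) := by
  ext n
  simp only [egf, PowerSeries.coeff_mul, PowerSeries.coeff_mk]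
  rw [Finset.Nat.sum_antidiagonal_eq_sum_range_succ_mk, Finset.sum_div]
  refine Finset.sum_congr rfl fun l hl => ?_
  have hl' : l ≤ n := Nat.lt_succ_iff.mp (Finset.mem_range.mp hl)
  have h1 : (l.factorial : ℝ) ≠ 0 := by positivity
  have h2 : ((n - l).factorial : ℝ) ≠ 0 := by positivity
  have h3 : (n.factorial : ℝ) ≠ 0 := by positivity
  rw [Nat.cast_choose ℝ hl']
  field_simp

lemma egf_add (a b : ℕ → ℝ) : egf a + egf b = egf fun n => a n + b n := by
  ext n
  simp [egf, add_div]

lemma two_mul_egf (a : ℕ → ℝ) : 2 * egf a = egf fun n => 2 * a n := by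
  rw [two_mul, egf_add]
  simp only [two_mul]

lemma egf_injective {a b : ℕ → ℝ} (h : egf a = egf b) (n : ℕ) : a n = b n := by
  have h1 := congrArg (PowerSeries.coeff n) h
  have h3 : (n.factorial : ℝ) ≠ 0 := by positivity
  simpa [egf, div_left_inj' h3] using h1

lemma rescale_egf (a : ℕ → ℝ) :
    PowerSeries.rescale (-1 : ℝ) (egf a) = egf fun n => (-1) ^ n * a n := by
  ext n
  simp [egf, PowerSeries.coeff_rescale, mul_div_assoc]

/-- The formal differential equation `(1 + λt) F' = x F` satisfied by `(1 + λt)^{x/λ}`. -/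
lemma egf_fallFac_deriv (lam x : ℝ) :
    (1 + PowerSeries.C lam * PowerSeries.X) * PowerSeries.derivative ℝ (egf (fallFac lam x)) =
      PowerSeries.C x * egf (fallFac lam x) := by
  ext n
  have key : ∀ m : ℕ, PowerSeries.coeff m (PowerSeries.derivative ℝ (egf (fallFac lam x))) =
      fallFac lam x m * (x - m * lam) / m.factorial := by
    intro m
    have h3 : (m.factorial : ℝ) ≠ 0 := by positivity
    have h4 : (m : ℝ) + 1 ≠ 0 := by positivity
    simp only [PowerSeries.coeff_derivative, egf, PowerSeries.coeff_mk, fallFac,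
      Nat.factorial_succ]
    push_cast
    field_simp
  rw [add_mul, one_mul, map_add, key, mul_assoc, PowerSeries.coeff_C_mul, PowerSeries.coeff_C_mul]
  cases n with
  | zero => simp [egf, fallFac]
  | succ m =>
    have h3 : (m.factorial : ℝ) ≠ 0 := by positivity
    have h4 : (m : ℝ) + 1 ≠ 0 := by positivity
    rw [PowerSeries.coeff_succ_X_mul, key]
    simp only [egf, PowerSeries.coeff_mk, fallFac, Nat.factorial_succ]
    push_cast
    field_simp
    ring

lemma egf_fallFac_mul (lam : ℝ) : egf (fallFac lam 1) * egf (fallFac lam (-1)) = 1 := by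
  apply PowerSeries.derivative.ext
  · have hne : (1 + PowerSeries.C lam * PowerSeries.X : PowerSeries ℝ) ≠ 0 := by
      intro h
      simpa using congrArg PowerSeries.constantCoeff h
    apply mul_left_cancel₀ hne
    have h1 := egf_fallFac_deriv lam 1
    have h2 := egf_fallFac_deriv lam (-1)
    rw [map_neg, map_one] at h2
    rw [map_one] at h1
    rw [Derivation.leibniz, Derivation.map_one_eq_zero, smul_eq_mul, smul_eq_mul]
    linear_combination egf (fallFac lam 1) * h2 + egf (fallFac lam (-1)) * h1
  · simp [egf, fallFac]

lemma neg_one_pow_mul_fallFac (lam : ℝ) (n : ℕ) :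
    (-1) ^ n * fallFac (-lam) 1 n = fallFac lam (-1) n := by
  induction n with
  | zero => simp [fallFac]
  | succ n ih =>
    simp only [fallFac, ← ih]
    ring

lemma egf_degE_mul (lam : ℝ) : egf (degE lam) * (egf (fallFac lam 1) + 1) = 2 := by
  rw [mul_add, mul_one, egf_mul, egf_add]
  ext n
  cases n with
  | zero =>
    rw [show (2 : PowerSeries ℝ) = PowerSeries.C 2 from (map_ofNat _ 2).symm]
    simp [egf, degE, fallFac]
    norm_num
  | succ n =>
    rw [show (2 : PowerSeries ℝ) = PowerSeries.C 2 from (map_ofNat _ 2).symm,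
      PowerSeries.coeff_C, if_neg (Nat.succ_ne_zero n)]
    have h : degE lam (n + 1) = -(1/2) * ∑ l ∈ Finset.range (n + 1),
        ((n+1).choose l : ℝ) * degE lam l * fallFac lam 1 (n + 1 - l) := by
      rw [degE, Finset.sum_attach (Finset.range (n + 1)) fun l =>
        ((n+1).choose l : ℝ) * degE lam l * fallFac lam 1 (n + 1 - l)]
    simp only [egf, PowerSeries.coeff_mk]
    rw [Finset.sum_range_succ, Nat.choose_self, Nat.sub_self, fallFac, div_eq_zero_iff]
    left
    push_cast
    linear_combination 2 * h

/-- The identity of generating functions `G = e (H + 2/e) - 2 e`. -/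
lemma egf_identity (lam : ℝ) :
    egf (degE lam) + 2 * egf (fallFac lam 1) = egf (fallFac lam 1) *
      PowerSeries.rescale (-1 : ℝ) (egf (degE (-lam)) + 2 * egf (fallFac (-lam) 1)) := by
  have hD : PowerSeries.rescale (-1 : ℝ) (egf (fallFac (-lam) 1)) = egf (fallFac lam (-1)) := by
    rw [rescale_egf]
    simp only [neg_one_pow_mul_fallFac]
  have h1 := egf_fallFac_mul lam
  have h2 := egf_degE_mul lam
  have h3 := congrArg (PowerSeries.rescale (-1 : ℝ)) (egf_degE_mul (-lam))
  simp only [map_mul, map_add, map_one, map_ofNat, hD] at h3 ⊢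
  have hne : egf (fallFac lam 1) + 1 ≠ 0 := by
    intro h
    rw [h, mul_zero] at h2
    have h4 := congrArg PowerSeries.constantCoeff h2
    rw [map_zero, map_ofNat] at h4
    norm_num at h4
  apply mul_right_cancel₀ hne
  generalize egf (fallFac lam 1) = e at *
  generalize egf (fallFac lam (-1)) = d at *
  generalize PowerSeries.rescale (-1 : ℝ) (egf (degE (-lam))) = H at *
  linear_combination h2 - e ^ 2 * h3 + (e * H - 2 * (e + 1)) * h1

/-- Theorem 2.10: `ℰ_{k,λ} = (1)_{k,λ} + Σ_{l=0}^{k-1} C(k,l)(-1)^{k+l}(1)_{l,λ}(ℰ_{k-l,-λ} + 2(1)_{k-l,-λ})`. -/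
theorem degE_identity (lam : ℝ) (k : ℕ) (hk : 0 < k) :
    degE lam k =
      fallFac lam 1 k +
        ∑ l ∈ Finset.range k, (k.choose l : ℝ) * (-1 : ℝ) ^ (k + l) * fallFac lam 1 l *
          (degE (-lam) (k - l) + 2 * fallFac (-lam) 1 (k - l)) := by
  have h := egf_identity lam
  rw [two_mul_egf, two_mul_egf, egf_add, egf_add, rescale_egf, egf_mul] at h
  have hk' := egf_injective h k
  rw [Finset.sum_range_succ] at hk'
  have hs : ∀ l ∈ Finset.range k,
      (k.choose l : ℝ) * (-1 : ℝ) ^ (k + l) * fallFac lam 1 l *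
        (degE (-lam) (k - l) + 2 * fallFac (-lam) 1 (k - l)) =
      (k.choose l : ℝ) * fallFac lam 1 l *
        ((-1) ^ (k - l) * (degE (-lam) (k - l) + 2 * fallFac (-lam) 1 (k - l))) := by
    intro l hl
    have hp : (-1 : ℝ) ^ (k + l) = (-1) ^ (k - l) := by
      rw [show k + l = (k - l) + 2 * l by have := Finset.mem_range.mp hl; omega, pow_add, pow_mul]
      simp
    rw [hp]
    ring
  rw [Finset.sum_congr rfl hs]
  have h0 : degE (-lam) 0 = 1 := by rw [degE]
  simp only [Nat.choose_self, Nat.sub_self, h0, fallFac, Nat.cast_one, pow_zero] at hk'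
  linear_combination hk'
end

section
/- For every real number λ and every positive integer k, Σ_{l=0}^{k−1} C(k,l)(−1)^{k+l}(1)_{l,λ}(1)_{k−l,−λ} = −(1)_{k,λ}. -/
/-!
The falling factorials `(x)_{n,λ}` are of binomial type: `Σ C(n,i) (x)_{i,λ} (y)_{n-i,λ} = (x+y)_{n,λ}`
(`fallFac_add`, the Vandermonde convolution). Since `(-1)^m (1)_{m,-λ} = (-1)_{m,λ}`, taking `x = 1`,
`y = -1` shows that the alternating sum extended to `l = k` equals `(0)_{k,λ}`, which vanishes for
`k ≥ 1`; the added term `l = k` is `(1)_{k,λ}`.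
-/

open Finset

theorem fallFac_add (lam x y : ℝ) (n : ℕ) :
    ∑ p ∈ antidiagonal n, (n.choose p.1 : ℝ) * (fallFac lam x p.1 * fallFac lam y p.2) =
      fallFac lam (x + y) n := by
  induction n with
  | zero => simp [fallFac]
  | succ n ih =>
    rw [sum_antidiagonal_choose_succ_mul (fun i j => fallFac lam x i * fallFac lam y j) n,
      ← sum_add_distrib, fallFac, ← ih, sum_mul]
    refine sum_congr rfl fun p hp => ?_
    have hpn := mem_antidiagonal.mp hp
    have hc : n.choose p.2 = n.choose p.1 := (Nat.choose_symm_of_eq_add hpn.symm).symm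
    have hn : (n : ℝ) = p.1 + p.2 := by rw [← hpn]; push_cast; ring
    rw [hc, hn]
    simp only [fallFac]
    ring

theorem fallFac_neg (lam x : ℝ) (n : ℕ) :
    fallFac lam (-x) n = (-1) ^ n * fallFac (-lam) x n := by
  induction n with
  | zero => simp [fallFac]
  | succ n ih => rw [fallFac, fallFac, ih]; ring

theorem fallFac_zero_of_pos (lam : ℝ) {n : ℕ} (hn : 0 < n) : fallFac lam 0 n = 0 := by
  induction n, hn using Nat.le_induction with
  | base => simp [fallFac]
  | succ n _ ih => rw [fallFac, ih, zero_mul]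

/-- `Σ_{l=0}^{k-1} C(k,l)(-1)^{k+l}(1)_{l,λ}(1)_{k-l,-λ} = -(1)_{k,λ}` for `k ≥ 1`. -/
theorem fallFac_alt_sum (lam : ℝ) (k : ℕ) (hk : 0 < k) :
    ∑ l ∈ Finset.range k, (k.choose l : ℝ) * (-1 : ℝ) ^ (k + l) * fallFac lam 1 l *
        fallFac (-lam) 1 (k - l) = -fallFac lam 1 k := by
  have h := fallFac_add lam 1 (-1) k
  rw [add_neg_cancel, fallFac_zero_of_pos lam hk, Nat.sum_antidiagonal_eq_sum_range_succ_mk,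
    sum_range_succ] at h
  simp only [Nat.choose_self, Nat.sub_self, fallFac, Nat.cast_one, one_mul, mul_one] at h
  rw [← eq_neg_iff_add_eq_zero.mpr h]
  refine sum_congr rfl fun l hl => ?_
  have hlk := mem_range.mp hl
  -- `k + l` and `k - l` have the same parity
  have hs : (-1 : ℝ) ^ (k + l) = (-1) ^ (k - l) := by
    rw [show k + l = (k - l) + 2 * l by omega, pow_add, pow_mul]
    simp
  rw [fallFac_neg, hs]
  ring
end
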